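/- arXiv:2511.13267 — 2 statements merged into one kernel-verified Lean document; each statement's English description precedes it below -/
import Mathlib

section
/- Let G be a cycle with 2m vertices (m ≥ 2) and let I_c(G) be its complementary edge ideal. Then pd(I_c(G)^s) = 2s for s ∈ [m−1], and pd(I_c(G)^s) = 2m−2 for all s ≥ m−1. -/
/-!
In multidegree `a`, the Koszul strand of `I` is the augmented chain complex of the simplicial
complex `Δ` of all `F` with `x^(a - ε_F) ∈ I`, so `pdim` asks for the largest `i` such that some
`Δ` has homology on sets of cardinality `i` (`nontrivial_hmod_iff`). For `I = I_c(C_n)^s`, `n = 2m`,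
a set `F` is a face iff `s` edges of the cycle can cover every vertex `v` at least
`s - a_v + [v ∈ F]` times (`face_iff`). The theorem is `pdim = 2 * min s (m - 1)` (`pdim_eq`).

*Upper bound `2s`.* A vertex with `a_v > s` is a cone point. Otherwise the degree count of `s` edges
gives `|F| ≤ 2s` for every face.

*Upper bound `2m - 2`.* Homology in degree `≥ n - 1` forces all `[n] ∖ {v}` to be faces while `[n]`
is not. An edge meets an independent set at most once, and an independent set misses some vertex, so
if all `[n] ∖ {v}` are faces, the demand for `[n]` has weight at most `s` on each independent set.
By bipartite duality, deduced from Hall's marriage theorem (`exists_cover`), `[n]` is then a face.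

*Lower bound.* Let `k = min s (m - 1)` and let `a` be `s` everywhere except `k` at the two ends of
one edge. In the exterior algebra put `Z = ∏_i (1 + e_i ∧ e_{i+1})`, indices mod `n`. The boundary is
the antiderivation with `e_i ↦ 1`, and `∂Z = (∑_i (e_{i+1} - e_i)) ∧ Z = 0` telescopes (`bd_mcyc`).
The part of `Z` on sets of cardinality `2k` is supported on unions of `k` disjoint edges, which are
faces, and is nonzero; since no face has `2k + 1` elements, it is not a boundary
(`nontrivial_topDeg`).
-/

open MvPolynomial

namespace Paper

noncomputable section

variable (K : Type) [Field K] (n : ℕ)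

/-- The polynomial ring `S = K[x_1, …, x_n]`. -/
abbrev S := MvPolynomial (Fin n) K

variable {n}

/-- The squarefree exponent vector of a subset `F ⊆ [n]`. -/
def expF (F : Finset (Fin n)) : Fin n →₀ ℕ := ∑ j ∈ F, Finsupp.single j 1

variable {K}

/-- Basis of the multidegree-`a` component of the `i`-th term of the Koszul
complex of `x_1, …, x_n` tensored with the ideal `I`:  subsets `F` of
cardinality `i` such that `x^(a - ε_F) ∈ I`. -/
abbrev KB (I : Ideal (S K n)) (a : Fin n →₀ ℕ) (i : ℕ) : Type :=
  {F : Finset (Fin n) // F.card = i ∧ expF F ≤ a ∧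
    (monomial (a - expF F) (1 : K) : S K n) ∈ I}

/-- The Koszul differential (in multidegree `a`) from homological degree
`i+1` to `i`. -/
def kd (I : Ideal (S K n)) (a : Fin n →₀ ℕ) (i : ℕ) :
    (KB I a (i + 1) →₀ K) →ₗ[K] (KB I a i →₀ K) :=
  Finsupp.lsum K fun F =>
    LinearMap.toSpanSingleton K _
      (∑ j ∈ F.1.attach,
        ((-1 : K) ^ ((F.1.filter (fun x => x < j.1)).card)) •
          Finsupp.single
            (⟨F.1.erase j.1, by
              obtain ⟨hcard, hle, hmem⟩ := F.2
              have hj : j.1 ∈ F.1 := j.2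
              have herase : expF (F.1.erase j.1) + Finsupp.single j.1 1 = expF F.1 := by
                simpa [expF] using Finset.sum_erase_add F.1 (fun k => Finsupp.single k (1:ℕ)) hj
              refine ⟨by simp [Finset.card_erase_of_mem hj, hcard], ?_, ?_⟩
              · refine le_trans ?_ hle
                rw [← herase]; exact le_add_of_nonneg_right bot_le
              · have h1 : Finsupp.single j.1 1 ≤ expF F.1 := by
                  rw [← herase]; exact le_add_of_nonneg_left bot_le
                have key : a - expF (F.1.erase j.1) =
                    (a - expF F.1) + Finsupp.single j.1 1 := by
                  have : expF (F.1.erase j.1) = expF F.1 - Finsupp.single j.1 1 := by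
                    rw [← herase]; simp
                  rw [this, tsub_tsub_assoc hle h1]
                rw [key]
                have : (monomial ((a - expF F.1) + Finsupp.single j.1 1) (1:K) : S K n)
                    = (monomial (a - expF F.1) (1:K)) * (monomial (Finsupp.single j.1 1) (1:K)) := by
                  rw [monomial_mul, mul_one]
                rw [this]
                exact Ideal.mul_mem_right _ _ hmem⟩ : KB I a i) (1 : K))

/-- The outgoing Koszul differential from homological degree `i`
(the zero map when `i = 0`). -/
def kdOut (I : Ideal (S K n)) (a : Fin n →₀ ℕ) :
    (i : ℕ) → (KB I a i →₀ K) →ₗ[K] (KB I a (i - 1) →₀ K)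
  | 0 => 0
  | (i + 1) => kd I a i

/-- The multidegree-`a` component of `Tor_i^S(K, I)`, computed as the `i`-th
homology of the multidegree-`a` strand of the Koszul complex tensored
with `I`. -/
abbrev Hmod (I : Ideal (S K n)) (a : Fin n →₀ ℕ) (i : ℕ) :=
  ↥(Submodule.map (Submodule.mkQ (LinearMap.range (kd I a i)))
      (LinearMap.ker (kdOut I a i)))

/-- The `i`-th homological shift ideal `HS_i(I)`, generated by the monomials
`x^a` with `Tor_i^S(K, I)_a ≠ 0`. -/
def HSIdeal (i : ℕ) (I : Ideal (S K n)) : Ideal (S K n) :=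
  Ideal.span {p | ∃ a : Fin n →₀ ℕ, Nontrivial (Hmod I a i) ∧ p = monomial a 1}

/-- `I` is a monomial ideal. -/
def IsMonomialIdeal (I : Ideal (S K n)) : Prop :=
  ∃ A : Set (Fin n →₀ ℕ), I = Ideal.span ((fun a => (monomial a 1 : S K n)) '' A)

/-- `I` has a `d`-linear resolution: `Tor_i^S(K,I)_j = 0` whenever `j ≠ i + d`. -/
def LinearRes (d : ℕ) (I : Ideal (S K n)) : Prop :=
  ∀ (i : ℕ) (a : Fin n →₀ ℕ), (a.sum fun _ e => e) ≠ i + d → Subsingleton (Hmod I a i)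

/-- The projective dimension of (a finitely generated multigraded module such
as) `I` over `S`: the largest `i` with `Tor_i^S(K, I) ≠ 0`. -/
def pdim (I : Ideal (S K n)) : ℕ :=
  sSup {i | ∃ a, Nontrivial (Hmod I a i)}

variable (K n)

/-- The graded maximal ideal `𝔪 = (x_1, …, x_n)`. -/
def maxIdl : Ideal (S K n) := Ideal.span (Set.range X)

/-- The `i`-th squarefree power `𝔪^{[i]} = (x_F : F ⊆ [n], |F| = i)`. -/
def sqPow (i : ℕ) : Ideal (S K n) :=
  Ideal.span {p | ∃ F : Finset (Fin n), F.card = i ∧ p = monomial (expF F) 1}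

/-- The exponent vector of `α = x_1⋯x_n`. -/
def aexp : Fin n →₀ ℕ := expF (Finset.univ : Finset (Fin n))

/-- The edge ideal `I(G)` of a graph `G` on `[n]`. -/
def edgeIdeal (G : SimpleGraph (Fin n)) : Ideal (S K n) :=
  Ideal.span {p | ∃ i j, G.Adj i j ∧ p = X i * X j}

/-- The complementary edge ideal `I_c(G)` of a graph `G` on `[n]`. -/
def compIdeal (G : SimpleGraph (Fin n)) : Ideal (S K n) :=
  Ideal.span {p | ∃ i j, G.Adj i j ∧
    p = monomial (aexp n - Finsupp.single i 1 - Finsupp.single j 1) 1}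


variable {K} {n}

end

/-! ### Koszul strands as simplicial chain complexes -/

section Chains

variable {K : Type} [Field K] {n : ℕ}

/-- The sign `(-1)^{#{x ∈ F : x < j}}` of the vertex `j` relative to `F`. -/
def sg (K : Type) [Field K] (j : Fin n) (F : Finset (Fin n)) : K :=
  (-1) ^ (F.filter (fun x => x < j)).card

lemma sg_mul_self (j : Fin n) (F : Finset (Fin n)) : sg K j F * sg K j F = 1 := by
  unfold sg
  rw [← mul_pow]; simp

lemma sg_ne_zero (j : Fin n) (F : Finset (Fin n)) : sg K j F ≠ 0 := by
  intro h; have := sg_mul_self (K := K) j F; simp [h] at this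

lemma sg_insert_of_lt {i j : Fin n} {F : Finset (Fin n)} (hj : j ∉ F) (h : j < i) :
    sg K i (insert j F) = - sg K i F := by
  unfold sg
  rw [Finset.filter_insert, if_pos h, Finset.card_insert_of_notMem (by simp [hj]), pow_succ]
  ring

lemma sg_insert_of_not_lt {i j : Fin n} {F : Finset (Fin n)} (h : ¬ j < i) :
    sg K i (insert j F) = sg K i F := by
  unfold sg
  rw [Finset.filter_insert, if_neg h]

/-- The simplicial boundary of the full simplex on `Fin n`, on coefficient functions. -/
def bd : (Finset (Fin n) → K) →ₗ[K] (Finset (Fin n) → K) where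
  toFun f R := ∑ j, if j ∈ R then 0 else sg K j R * f (insert j R)
  map_add' f g := by
    ext R
    simp only [Pi.add_apply, ← Finset.sum_add_distrib]
    refine Finset.sum_congr rfl fun j _ => ?_
    split_ifs <;> ring
  map_smul' c f := by
    ext R
    simp only [Pi.smul_apply, smul_eq_mul, Finset.mul_sum, RingHom.id_apply]
    refine Finset.sum_congr rfl fun j _ => ?_
    split_ifs <;> ring

lemma bd_apply (f : Finset (Fin n) → K) (R : Finset (Fin n)) :
    bd f R = ∑ j, if j ∈ R then 0 else sg K j R * f (insert j R) := rfl

/-- Exterior multiplication by the `i`-th basis vector, on coefficient functions. -/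
def wed (i : Fin n) : (Finset (Fin n) → K) →ₗ[K] (Finset (Fin n) → K) where
  toFun f F := if i ∈ F then sg K i F * f (F.erase i) else 0
  map_add' f g := by
    ext R
    simp only [Pi.add_apply]
    split_ifs <;> ring
  map_smul' c f := by
    ext R
    simp only [Pi.smul_apply, smul_eq_mul, RingHom.id_apply]
    split_ifs <;> ring

lemma wed_apply (i : Fin n) (f : Finset (Fin n) → K) (F : Finset (Fin n)) :
    wed i f F = if i ∈ F then sg K i F * f (F.erase i) else 0 := rfl

lemma wed_notMem {i : Fin n} (f : Finset (Fin n) → K) {F : Finset (Fin n)} (h : i ∉ F) :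
    wed i f F = 0 := by rw [wed_apply, if_neg h]

lemma wed_insert {i : Fin n} (f : Finset (Fin n) → K) {F : Finset (Fin n)} (h : i ∉ F) :
    wed i f (insert i F) = sg K i F * f F := by
  rw [wed_apply, if_pos (Finset.mem_insert_self _ _), Finset.erase_insert h,
    sg_insert_of_not_lt (lt_irrefl _)]

lemma wed_wed_self (i : Fin n) (f : Finset (Fin n) → K) : wed i (wed i f) = 0 := by
  ext F
  by_cases h : i ∈ F
  · rw [← Finset.insert_erase h, wed_insert _ (by simp), wed_notMem _ (by simp)]; simp
  · rw [wed_notMem _ h]; rfl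

lemma wed_anticomm (i j : Fin n) (f : Finset (Fin n) → K) :
    wed i (wed j f) = - wed j (wed i f) := by
  by_cases hij : i = j
  · subst hij; simp [wed_wed_self]
  wlog hlt : i < j generalizing i j
  · rw [this j i (Ne.symm hij) (lt_of_le_of_ne (not_lt.mp hlt) (Ne.symm hij)), neg_neg]
  ext F
  simp only [Pi.neg_apply]
  by_cases hi : i ∈ F
  · by_cases hj : j ∈ F
    · obtain ⟨G, hiG, hjG, rfl⟩ : ∃ G : Finset (Fin n), i ∉ G ∧ j ∉ G ∧ F = insert i (insert j G) :=
        ⟨(F.erase i).erase j, by simp, by simp, by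
          rw [Finset.insert_erase (by simp [hj, Ne.symm hij]), Finset.insert_erase hi]⟩
      rw [wed_insert _ (by simp [hij, hiG]), wed_insert _ hjG, Finset.insert_comm,
        wed_insert _ (by simp [Ne.symm hij, hjG]), wed_insert _ hiG,
        sg_insert_of_lt hiG hlt, sg_insert_of_not_lt hlt.not_gt]
      ring
    · rw [wed_notMem _ hj, wed_apply, if_pos hi, wed_notMem _ (by simp [hj])]; simp
  · rw [wed_notMem _ hi, wed_apply j]
    split_ifs
    · rw [wed_notMem _ (by simp [hi])]; simp
    · simp

/-- The boundary is a contraction: it satisfies the Clifford relation with exterior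
multiplication. -/
lemma bd_wed (i : Fin n) (f : Finset (Fin n) → K) : bd (wed i f) = f - wed i (bd f) := by
  ext R
  simp only [Pi.sub_apply]
  by_cases hi : i ∈ R
  · obtain ⟨G, hiG, rfl⟩ : ∃ G : Finset (Fin n), i ∉ G ∧ R = insert i G :=
      ⟨R.erase i, by simp, by rw [Finset.insert_erase hi]⟩
    rw [wed_insert _ hiG, bd_apply, bd_apply, ← Finset.add_sum_erase _ _ (Finset.mem_univ i),
      ← Finset.add_sum_erase Finset.univ (fun j => if j ∈ G then 0 else sg K j G * f (insert j G))
        (Finset.mem_univ i), if_pos hi, if_neg hiG, mul_add, ← mul_assoc, sg_mul_self, one_mul,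
      zero_add, Finset.mul_sum, sub_add_eq_sub_sub, sub_self, zero_sub, ← Finset.sum_neg_distrib]
    refine Finset.sum_congr rfl fun j hj => ?_
    have hji : j ≠ i := Finset.ne_of_mem_erase hj
    by_cases hjG : j ∈ G
    · simp [hjG]
    · rw [if_neg (by simp [hji, hjG]), if_neg hjG, Finset.insert_comm,
        wed_insert _ (by simp [hji.symm, hiG])]
      rcases lt_or_gt_of_ne hji with h | h
      · rw [sg_insert_of_lt hjG h, sg_insert_of_not_lt h.not_gt]; ring
      · rw [sg_insert_of_lt hiG h, sg_insert_of_not_lt h.not_gt]; ring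
  · rw [wed_notMem _ hi, sub_zero, bd_apply, Finset.sum_eq_single i, if_neg hi, wed_insert _ hi,
      ← mul_assoc, sg_mul_self, one_mul]
    · intro j _ hji
      split_ifs with hj
      · rfl
      · rw [wed_notMem _ (by simp [hi, hji.symm]), mul_zero]
    · simp

/-- Faces of the upper Koszul simplicial complex of `I` in multidegree `a`. -/
def Face (I : Ideal (S K n)) (a : Fin n →₀ ℕ) (F : Finset (Fin n)) : Prop :=
  expF F ≤ a ∧ (monomial (a - expF F) (1 : K) : S K n) ∈ I

/-- `f` is an `i`-chain (sets of cardinality `i`) of the upper Koszul complex. -/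
def IsKoszulChain (I : Ideal (S K n)) (a : Fin n →₀ ℕ) (i : ℕ) (f : Finset (Fin n) → K) : Prop :=
  ∀ F, f F ≠ 0 → F.card = i ∧ Face I a F

open Classical in
/-- Extension by zero of a chain of the Koszul strand to all subsets of `Fin n`. -/
noncomputable def ez (I : Ideal (S K n)) (a : Fin n →₀ ℕ) (i : ℕ) :
    (KB I a i →₀ K) →ₗ[K] (Finset (Fin n) → K) where
  toFun f F := if h : F.card = i ∧ Face I a F then f ⟨F, h⟩ else 0
  map_add' f g := by ext F; simp only [Pi.add_apply]; split_ifs <;> simp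
  map_smul' c f := by ext F; simp only [Pi.smul_apply, RingHom.id_apply]; split_ifs <;> simp

lemma ez_coe (I : Ideal (S K n)) (a : Fin n →₀ ℕ) (i : ℕ) (f : KB I a i →₀ K) (F : KB I a i) :
    ez I a i f F.1 = f F := dif_pos F.2

lemma ez_injective (I : Ideal (S K n)) (a : Fin n →₀ ℕ) (i : ℕ) :
    Function.Injective (ez I a i) := by
  intro f g h
  ext F
  rw [← ez_coe, h, ez_coe]

lemma isKoszulChain_ez (I : Ideal (S K n)) (a : Fin n →₀ ℕ) (i : ℕ) (f : KB I a i →₀ K) :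
    IsKoszulChain I a i (ez I a i f) := by
  intro F hF
  by_contra h
  exact hF (dif_neg h)

lemma exists_ez {I : Ideal (S K n)} {a : Fin n →₀ ℕ} {i : ℕ} {f : Finset (Fin n) → K}
    (hf : IsKoszulChain I a i f) : ∃ g, ez I a i g = f := by
  classical
  refine ⟨Finsupp.equivFunOnFinite.symm fun F => f F.1, ?_⟩
  ext F
  by_cases h : F.card = i ∧ Face I a F
  · exact (ez_coe I a i _ ⟨F, h⟩)
  · rw [show ez I a i _ F = 0 from dif_neg h]
    by_contra h'
    exact h (hf F (Ne.symm h'))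

lemma ez_single (I : Ideal (S K n)) (a : Fin n →₀ ℕ) (i : ℕ) (F : KB I a i) (c : K)
    (R : Finset (Fin n)) : ez I a i (Finsupp.single F c) R = if F.1 = R then c else 0 := by
  by_cases h : R.card = i ∧ Face I a R
  · have := ez_coe I a i (Finsupp.single F c) ⟨R, h⟩
    simp only at this
    rw [this, Finsupp.single_apply]
    simp [Subtype.ext_iff]
  · rw [if_neg]
    · exact dif_neg h
    · rintro rfl; exact h F.2

/-- Extension by zero intertwines the Koszul differential with the simplicial boundary. -/
lemma ez_kd (I : Ideal (S K n)) (a : Fin n →₀ ℕ) (i : ℕ) (f : KB I a (i + 1) →₀ K) :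
    ez I a i (kd I a i f) = bd (ez I a (i + 1) f) := by
  induction f using Finsupp.induction_linear with
  | zero => simp
  | add f g hf hg => simp only [map_add, hf, hg]
  | single F c =>
    ext R
    simp only [kd, Finsupp.lsum_single, LinearMap.toSpanSingleton_apply, map_smul, map_sum,
      Pi.smul_apply, Finset.sum_apply, ez_single, bd_apply, smul_eq_mul]
    rw [Finset.sum_attach F.1 (fun j => (-1 : K) ^ ((F.1.filter (fun x => x < j)).card) *
      if F.1.erase j = R then 1 else 0), Finset.mul_sum,
      ← Finset.sum_subset (Finset.subset_univ F.1)]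
    · refine Finset.sum_congr rfl fun j hj => ?_
      by_cases hR : F.1.erase j = R
      · have hjR : j ∉ R := by rw [← hR]; simp
        have hF : F.1 = insert j R := by rw [← hR, Finset.insert_erase hj]
        rw [if_pos hR, if_neg hjR, if_pos hF]
        have : (-1 : K) ^ ((F.1.filter (fun x => x < j)).card) = sg K j R := by
          rw [← sg_insert_of_not_lt (lt_irrefl j), ← hF]; rfl
        rw [this]; ring
      · rw [if_neg hR]
        split_ifs with h1 h2
        · simp
        · exact absurd (by rw [h2, Finset.erase_insert h1]) hR
        · simp
    · intro j _ hj
      split_ifs with h1 h2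
      · rfl
      · exact absurd (h2 ▸ Finset.mem_insert_self j R) hj
      · simp

lemma mem_ker_kdOut (I : Ideal (S K n)) (a : Fin n →₀ ℕ) (i : ℕ) (f : KB I a i →₀ K) :
    kdOut I a i f = 0 ↔ bd (ez I a i f) = 0 := by
  cases i with
  | zero =>
    simp only [kdOut, LinearMap.zero_apply, true_iff]
    ext R
    rw [bd_apply]
    refine Finset.sum_eq_zero fun j _ => ?_
    split_ifs
    · rfl
    · by_contra h
      have := (isKoszulChain_ez I a 0 f _ (right_ne_zero_of_mul h)).1
      simp at this
  | succ i =>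
    rw [← ez_kd, map_eq_zero_iff _ (ez_injective I a i)]
    rfl

/-- `Hmod` is the reduced homology of the upper Koszul complex. -/
lemma nontrivial_hmod_iff (I : Ideal (S K n)) (a : Fin n →₀ ℕ) (i : ℕ) :
    Nontrivial (Hmod I a i) ↔ ∃ f, IsKoszulChain I a i f ∧ bd f = 0 ∧
      ∀ g, IsKoszulChain I a (i + 1) g → bd g ≠ f := by
  rw [Submodule.nontrivial_iff_ne_bot, Ne, ← LinearMap.le_ker_iff_map, Submodule.ker_mkQ,
    SetLike.not_le_iff_exists]
  constructor
  · rintro ⟨f, hf, hf'⟩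
    refine ⟨ez I a i f, isKoszulChain_ez _ _ _ _, (mem_ker_kdOut I a i f).1 hf, fun g hg h => hf' ?_⟩
    obtain ⟨g, rfl⟩ := exists_ez hg
    rw [← ez_kd] at h
    exact ⟨g, ez_injective _ _ _ h⟩
  · rintro ⟨f, hf, hbd, hf'⟩
    obtain ⟨f, rfl⟩ := exists_ez hf
    refine ⟨f, (mem_ker_kdOut I a i f).2 hbd, ?_⟩
    rintro ⟨g, rfl⟩
    exact hf' _ (isKoszulChain_ez I a (i + 1) g) (ez_kd I a i g).symm

/-- A cone has no reduced homology. -/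
lemma not_nontrivial_of_cone (I : Ideal (S K n)) (a : Fin n →₀ ℕ) (i : ℕ) (v : Fin n)
    (hv : ∀ F, Face I a F → Face I a (insert v F)) : ¬ Nontrivial (Hmod I a i) := by
  rw [nontrivial_hmod_iff]
  rintro ⟨f, hf, hbd, h⟩
  refine h (wed v f) ?_ (by rw [bd_wed, hbd]; simp)
  intro F hF
  have hvF : v ∈ F := by
    by_contra h'; exact hF (wed_notMem _ h')
  obtain ⟨h1, h2⟩ := hf (F.erase v) (by
    rw [wed_apply, if_pos hvF] at hF; exact right_ne_zero_of_mul hF)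
  refine ⟨?_, by simpa [Finset.insert_erase hvF] using hv _ h2⟩
  rw [← h1, Finset.card_erase_add_one hvF]

/-- A complex other than the boundary of the full simplex has no homology in degrees `≥ n - 1`:
if the full set is a face then the complex is a cone, and if some `[n] ∖ {w}` is missing then a
cycle on sets of cardinality `≥ n - 1` vanishes. -/
lemma card_le_of_nontrivial (I : Ideal (S K n)) (a : Fin n →₀ ℕ) (i : ℕ)
    (hI : (∀ v, Face I a (Finset.univ.erase v)) → Face I a Finset.univ)
    (hdown : Face I a Finset.univ → ∀ F, Face I a F) (hn : 2 ≤ n)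
    (h : Nontrivial (Hmod I a i)) : i ≤ n - 2 := by
  by_contra hi
  have huniv : ¬ Face I a Finset.univ := fun hu =>
    not_nontrivial_of_cone I a i ⟨0, by omega⟩ (fun F _ => hdown hu _) h
  obtain ⟨w, hw⟩ : ∃ w, ¬ Face I a (Finset.univ.erase w) := by
    by_contra! h'; exact huniv (hI h')
  obtain ⟨f, hf, hbd, hne⟩ := (nontrivial_hmod_iff I a i).1 h
  suffices f = 0 by
    exact hne 0 (fun F hF => absurd rfl hF) (by rw [this]; simp)
  have hfu : f Finset.univ = 0 := by
    by_contra h'; exact huniv (hf _ h').2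
  have hfw : f (Finset.univ.erase w) = 0 := by
    by_contra h'; exact hw (hf _ h').2
  have hfv : ∀ v, f (Finset.univ.erase v) = 0 := by
    intro v
    by_cases hvw : v = w
    · rw [hvw, hfw]
    have key := congrFun hbd ((Finset.univ.erase v).erase w)
    rw [bd_apply, Finset.sum_eq_single w] at key
    · rw [if_neg (by simp), Finset.insert_erase (by simp [Ne.symm hvw])] at key
      exact (mul_eq_zero.1 key).resolve_left (sg_ne_zero _ _)
    · intro j _ hj
      split_ifs with hjm
      · rfl
      · have : j = v := by
          by_contra hjv; exact hjm (by simp [hj, hjv])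
        subst this
        rw [Finset.erase_right_comm, Finset.insert_erase (by simp [hvw]), hfw, mul_zero]
    · simp
  ext F
  by_contra hF
  have hc := (hf F hF).1
  have h1 : F.card ≤ n := by simpa using F.card_le_univ
  have h2 : Fᶜ.card ≤ 1 := by rw [Finset.card_compl, Fintype.card_fin]; omega
  rcases Nat.le_one_iff_eq_zero_or_eq_one.1 h2 with h3 | h3
  · have : F = Finset.univ := by simpa using h3
    exact hF (by rw [this, hfu]; rfl)
  · obtain ⟨v, hv⟩ := Finset.card_eq_one.1 h3
    have : F = Finset.univ.erase v := by
      rw [← compl_compl F, hv, Finset.compl_singleton]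
    exact hF (by rw [this, hfv]; rfl)

end Chains

/-! ### The matching cycle -/

section Cycle

variable {K : Type} [Field K] {n : ℕ} [NeZero n]

/-- The vertex `j mod n` of the cycle. -/
def vt (n : ℕ) [NeZero n] (j : ℕ) : Fin n := Fin.ofNat n j

/-- The successor of a vertex on the cycle; `v` also indexes the edge `{v, nx v}`. -/
def nx (v : Fin n) : Fin n := Fin.ofNat n (v + 1)

lemma vt_val (j : ℕ) : (vt n j : ℕ) = j % n := rfl

lemma nx_val (v : Fin n) : (nx v : ℕ) = (v + 1) % n := rfl

lemma nx_vt (j : ℕ) : nx (vt n j) = vt n (j + 1) := by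
  ext; simp [nx_val, vt_val]

/-- The coefficient function of `∏_{i < j} (1 + e_i ∧ e_{i+1})`, indices taken mod `n`. -/
def mcyc (K : Type) [Field K] (n : ℕ) [NeZero n] : ℕ → Finset (Fin n) → K
  | 0 => Pi.single ∅ 1
  | j + 1 => mcyc K n j + wed (vt n j) (wed (vt n (j + 1)) (mcyc K n j))

/-- The boundary of the partial product telescopes. -/
lemma bd_mcyc (j : ℕ) :
    bd (mcyc K n j) = wed (vt n j) (mcyc K n j) - wed (vt n 0) (mcyc K n j) := by
  induction j with
  | zero =>
    rw [sub_self]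
    ext R
    rw [bd_apply]
    refine Finset.sum_eq_zero fun i _ => ?_
    split_ifs
    · rfl
    · simp [mcyc]
  | succ j ih =>
    generalize hx : mcyc K n j = x at ih
    simp only [mcyc, hx, map_add, bd_wed, ih, map_sub]
    rw [wed_anticomm (vt n (j + 1)) (vt n j) (wed (vt n (j + 1)) x), wed_wed_self,
      wed_anticomm (vt n (j + 1)) (vt n j) x, wed_anticomm (vt n 0) (vt n j),
      wed_anticomm (vt n 0) (vt n (j + 1)) x]
    simp only [map_neg, wed_wed_self, map_zero]
    abel

lemma bd_mcyc_self : bd (mcyc K n n) = 0 := by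
  rw [bd_mcyc, show vt n n = vt n 0 by ext; simp [vt_val], sub_self]

/-- Sets in the support of the product are unions of disjoint edges. -/
lemma mcyc_support (j : ℕ) (F : Finset (Fin n)) (hF : mcyc K n j F ≠ 0) :
    (∃ l : List (Fin n), F.card = 2 * l.length ∧ ∀ v ∈ F, ∃ e ∈ l, v = e ∨ v = nx e) ∧
      ∀ v ∈ F, (v : ℕ) ≤ j := by
  induction j generalizing F with
  | zero =>
    have : F = ∅ := by
      by_contra h; exact hF (by simp [mcyc, h])
    subst this
    exact ⟨⟨[], by simp⟩, by simp⟩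
  | succ j ih =>
    by_cases h : mcyc K n j F = 0
    · have h1 : wed (vt n j) (wed (vt n (j + 1)) (mcyc K n j)) F ≠ 0 := by
        simpa [mcyc, h] using hF
      have m1 : vt n j ∈ F := by
        by_contra h'; exact h1 (wed_notMem _ h')
      rw [wed_apply, if_pos m1] at h1
      have h2 := right_ne_zero_of_mul h1
      have m2 : vt n (j + 1) ∈ F.erase (vt n j) := by
        by_contra h'; exact h2 (wed_notMem _ h')
      rw [wed_apply, if_pos m2] at h2
      obtain ⟨⟨l, hl, hc⟩, hle⟩ := ih _ (right_ne_zero_of_mul h2)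
      refine ⟨⟨vt n j :: l, ?_, ?_⟩, ?_⟩
      · have e1 := Finset.card_erase_add_one m1
        have e2 := Finset.card_erase_add_one m2
        rw [List.length_cons]; omega
      · intro v hv
        by_cases hv1 : v = vt n j
        · exact ⟨_, List.mem_cons_self, Or.inl hv1⟩
        by_cases hv2 : v = vt n (j + 1)
        · exact ⟨_, List.mem_cons_self, Or.inr (by rw [nx_vt, hv2])⟩
        obtain ⟨e, he, h⟩ := hc v (by simp [hv, hv1, hv2])
        exact ⟨e, List.mem_cons_of_mem _ he, h⟩
      · intro v hv
        by_cases hv1 : v = vt n j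
        · rw [hv1, vt_val]; exact (Nat.mod_le _ _).trans (by omega)
        by_cases hv2 : v = vt n (j + 1)
        · rw [hv2, vt_val]; exact (Nat.mod_le _ _)
        exact (hle v (by simp [hv, hv1, hv2])).trans (by omega)
    · obtain ⟨hl, hle⟩ := ih _ h
      exact ⟨hl, fun v hv => (hle v hv).trans (by omega)⟩

/-- The initial segment `{0, …, 2k-1}` has a unique perfect matching, so it survives in the
product. -/
lemma mcyc_ne_zero (j : ℕ) (hj : j ≤ n) (k : ℕ) (hk : 2 * k ≤ j + 1) (hkn : 2 * k < n) :
    mcyc K n j (Finset.univ.filter fun v : Fin n => (v : ℕ) < 2 * k) ≠ 0 := by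
  induction j generalizing k with
  | zero =>
    obtain rfl : k = 0 := by omega
    simp [mcyc]
  | succ j ih =>
    have hvj : (vt n j : ℕ) = j := by rw [vt_val, Nat.mod_eq_of_lt (by omega)]
    by_cases h : 2 * k ≤ j + 1
    · have := ih (by omega) k h hkn
      suffices wed (vt n j) (wed (vt n (j + 1)) (mcyc K n j))
          (Finset.univ.filter fun v : Fin n => (v : ℕ) < 2 * k) = 0 by
        simpa only [mcyc, Pi.add_apply, this, add_zero]
      by_cases hjn : j + 1 = n
      · exact wed_notMem _ (by simp [hvj]; omega)
      · have hvj' : (vt n (j + 1) : ℕ) = j + 1 := by rw [vt_val, Nat.mod_eq_of_lt (by omega)]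
        rw [wed_apply]
        split_ifs
        · rw [wed_notMem _ (by simp [hvj']; omega), mul_zero]
        · rfl
    · have hvj' : (vt n (j + 1) : ℕ) = j + 1 := by rw [vt_val, Nat.mod_eq_of_lt (by omega)]
      obtain ⟨k, rfl⟩ : ∃ k', k = k' + 1 := ⟨k - 1, by omega⟩
      have h0 : mcyc K n j (Finset.univ.filter fun v : Fin n => (v : ℕ) < 2 * (k + 1)) = 0 := by
        by_contra hne
        have := (mcyc_support j _ hne).2 (vt n (j + 1)) (by simp [hvj']; omega)
        omega
      have hF : (Finset.univ.filter fun v : Fin n => (v : ℕ) < 2 * (k + 1)) =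
          insert (vt n j) (insert (vt n (j + 1))
            (Finset.univ.filter fun v : Fin n => (v : ℕ) < 2 * k)) := by
        ext v
        simp only [Finset.mem_filter, Finset.mem_univ, true_and, Finset.mem_insert, Fin.ext_iff,
          hvj, hvj']
        omega
      simp only [mcyc, Pi.add_apply, h0, zero_add]
      rw [hF, wed_insert _ (by simp [Fin.ext_iff, hvj, hvj']; omega),
        wed_insert _ (by simp [hvj']; omega)]
      exact mul_ne_zero (sg_ne_zero _ _) (mul_ne_zero (sg_ne_zero _ _)
        (ih (by omega) k (by omega) (by omega)))

end Cycle

/-! ### Faces and edge covers -/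

section Faces

variable {K : Type} [Field K] {n : ℕ} [NeZero n]

/-- The number of edges of the family `e` containing `v`. -/
def cov {s : ℕ} (e : Fin s → Fin n) (v : Fin n) : ℕ :=
  (Finset.univ.filter fun t => v = e t ∨ v = nx (e t)).card

lemma cov_eq_sum {s : ℕ} (e : Fin s → Fin n) (v : Fin n) :
    cov e v = ∑ t, if v = e t ∨ v = nx (e t) then 1 else 0 := by
  rw [cov, Finset.card_filter]

lemma cov_le {s : ℕ} (e : Fin s → Fin n) (v : Fin n) : cov e v ≤ s :=
  (Finset.card_le_univ _).trans (by simp)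

lemma sum_cov_le {s : ℕ} (e : Fin s → Fin n) : ∑ v, cov e v ≤ 2 * s := by
  simp only [cov_eq_sum]
  rw [Finset.sum_comm]
  calc _ ≤ ∑ t : Fin s, 2 := by
        refine Finset.sum_le_sum fun t _ => ?_
        rw [← Finset.card_filter]
        refine (Finset.card_le_card (t := {e t, nx (e t)}) ?_).trans Finset.card_le_two
        intro v; simp
    _ = 2 * s := by simp [mul_comm]

/-- An edge meets an independent set at most once. -/
lemma sum_cov_le_of_indep {s : ℕ} (e : Fin s → Fin n) (A : Finset (Fin n))
    (hA : ∀ v ∈ A, nx v ∉ A) : ∑ v ∈ A, cov e v ≤ s := by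
  simp only [cov_eq_sum]
  rw [Finset.sum_comm]
  calc _ ≤ ∑ t : Fin s, 1 := by
        refine Finset.sum_le_sum fun t _ => ?_
        rw [← Finset.card_filter, Finset.card_le_one]
        intro x hx y hy
        rw [Finset.mem_filter] at hx hy
        obtain ⟨hx, rfl | rfl⟩ := hx <;> obtain ⟨hy, h | h⟩ := hy
        · exact h.symm
        · exact absurd (h ▸ hy) (hA _ hx)
        · exact absurd hx (hA _ (h ▸ hy))
        · exact h.symm
    _ = s := by simp

lemma expF_apply {n : ℕ} (F : Finset (Fin n)) (v : Fin n) : expF F v = if v ∈ F then 1 else 0 := by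
  simp [expF, Finsupp.finsetSum_apply, Finsupp.single_apply]

/-- The exponent of the generator of `I_c` attached to the edge `{i, nx i}`. -/
noncomputable def gexp (i : Fin n) : Fin n →₀ ℕ :=
  aexp n - Finsupp.single i 1 - Finsupp.single (nx i) 1

lemma sum_gexp_add_cov {s : ℕ} (e : Fin s → Fin n) (v : Fin n) :
    (∑ t, gexp (e t)) v + cov e v = s := by
  rw [cov_eq_sum, Finsupp.finsetSum_apply, ← Finset.sum_add_distrib]
  calc _ = ∑ t : Fin s, 1 := by
        refine Finset.sum_congr rfl fun t _ => ?_
        simp only [gexp, aexp, Finsupp.tsub_apply, expF_apply, Finset.mem_univ, if_true,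
          Finsupp.single_apply]
        grind
    _ = s := by simp

lemma span_monomial_pow (g : Fin n → Fin n →₀ ℕ) (s : ℕ) :
    (Ideal.span (Set.range fun i => (monomial (g i) 1 : S K n))) ^ s =
      Ideal.span ((fun b => (monomial b 1 : S K n)) ''
        Set.range fun e : Fin s → Fin n => ∑ t, g (e t)) := by
  induction s with
  | zero => simp [Ideal.one_eq_top, Ideal.span_singleton_one]
  | succ s ih =>
    rw [pow_succ', ih, Ideal.span_mul_span']
    congr 1
    ext p
    simp only [Set.mem_mul, Set.mem_range, Set.mem_image, exists_exists_eq_and]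
    constructor
    · rintro ⟨i, e, rfl⟩
      exact ⟨Fin.cons i e, by simp [Fin.sum_univ_succ, monomial_mul]⟩
    · rintro ⟨e, rfl⟩
      exact ⟨e 0, fun t => e t.succ, by simp [Fin.sum_univ_succ, monomial_mul]⟩

/-- `F` is a face iff the demand `s - a + ε_F` can be covered by `s` edges of the cycle. -/
lemma face_iff (G : SimpleGraph (Fin n))
    (hG : ∀ i j, G.Adj i j ↔ j = nx i ∨ i = nx j) (s : ℕ) (a : Fin n →₀ ℕ)
    (F : Finset (Fin n)) :
    Face (compIdeal K n G ^ s) a F ↔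
      ∃ e : Fin s → Fin n, ∀ v, s + (if v ∈ F then 1 else 0) ≤ a v + cov e v := by
  have h1 : compIdeal K n G = Ideal.span (Set.range fun i => (monomial (gexp i) 1 : S K n)) := by
    rw [compIdeal]
    congr 1
    ext p
    simp only [Set.mem_ofPred_eq, Set.mem_range, hG]
    constructor
    · rintro ⟨i, j, rfl | rfl, rfl⟩
      · exact ⟨i, rfl⟩
      · exact ⟨j, by rw [gexp, tsub_right_comm]⟩
    · rintro ⟨i, rfl⟩
      exact ⟨i, nx i, Or.inl rfl, rfl⟩
  have hsupp : (monomial (a - expF F) (1 : K)).support = {a - expF F} := by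
    classical rw [support_monomial, if_neg one_ne_zero]
  rw [Face, h1, span_monomial_pow, mem_ideal_span_monomial_image, hsupp]
  simp only [Finset.mem_singleton, forall_eq,
    Set.mem_range, exists_exists_eq_and]
  constructor
  · rintro ⟨hle, e, he⟩
    refine ⟨e, fun v => ?_⟩
    have h2 := he v
    have h3 := hle v
    have h4 := sum_gexp_add_cov e v
    rw [Finsupp.tsub_apply, expF_apply] at h2
    rw [expF_apply] at h3
    omega
  · rintro ⟨e, he⟩
    have h3 : expF F ≤ a := fun v => by
      have := he v
      have := cov_le e v
      rw [expF_apply]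
      omega
    refine ⟨h3, e, fun v => ?_⟩
    have h2 := he v
    have h4 := sum_gexp_add_cov e v
    rw [Finsupp.tsub_apply, expF_apply]
    omega

end Faces

/-! ### Duality on even cycles -/

section Duality

variable {n : ℕ}

/-- The units of a demand `c`: each vertex `v` is repeated `c v` times. -/
abbrev Demand (c : Fin n → ℕ) : Type := Σ v : Fin n, Fin (c v)

/-- The units of demand outside the colour class `ev`, together with `d` spare slots. -/
abbrev Slot (ev : Fin n → Prop) (c : Fin n → ℕ) (d : ℕ) : Type :=
  {q : Demand c // ¬ ev q.1} ⊕ Fin d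

/-- Integral duality between edge covers and independent sets on an even cycle: a demand `c`
whose weight on every independent set is at most `s` can be covered by `s` edges. The predicate
`ev` is one of the two colour classes. -/
lemma exists_cover [NeZero n] (ev : Fin n → Prop) (hev : ∀ v, ev (nx v) ↔ ¬ ev v) (c : Fin n → ℕ) (s : ℕ)
    (hc : ∀ A : Finset (Fin n), (∀ v ∈ A, nx v ∉ A) → ∑ v ∈ A, c v ≤ s) :
    ∃ e : Fin s → Fin n, ∀ v, c v ≤ cov e v := by
  classical
  have hodd : ∑ v with ¬ ev v, c v ≤ s := hc _ (by
    intro v hv hv'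
    rw [Finset.mem_filter] at hv hv'
    exact hv'.2 ((hev v).2 hv.2))
  -- With this many spare slots there are exactly `s` slots, and Hall's theorem applies.
  let d := s - ∑ v with ¬ ev v, c v
  have hcardσ : Fintype.card (Slot ev c d) = s := by
    have : Fintype.card {q : Demand c // ¬ ev q.1} = ∑ v with ¬ ev v, c v := by
      rw [Fintype.card_subtype]
      have : (Finset.univ.filter fun q : Demand c => ¬ ev q.1) =
          (Finset.univ.filter fun v => ¬ ev v).sigma fun v => (Finset.univ : Finset (Fin (c v))) := by
        ext q; simp
      rw [this, Finset.card_sigma]; simp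
    rw [Fintype.card_sum, this, Fintype.card_fin]
    omega
  let adj : Fin n → Fin n → Prop := fun u v => v = nx u ∨ u = nx v
  let T : {p : Demand c // ev p.1} → Finset (Slot ev c d) := fun p =>
    (Finset.univ.filter fun q : {q : Demand c // ¬ ev q.1} => adj p.1.1 q.1.1).disjSum Finset.univ
  have hall : ∀ X : Finset {p : Demand c // ev p.1}, X.card ≤ (X.biUnion T).card := by
    intro X
    rcases X.eq_empty_or_nonempty with rfl | ⟨x₀, hx₀⟩
    · simp
    let B : Finset (Fin n) := X.image fun p => p.1.1
    let N : Finset (Fin n) := Finset.univ.filter fun u => ¬ ev u ∧ ∃ v ∈ B, adj v u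
    let N' : Finset (Fin n) := Finset.univ.filter fun u => ¬ ev u ∧ ¬ ∃ v ∈ B, adj v u
    have hB : ∀ v ∈ B, ev v := by
      intro v hv
      obtain ⟨p, _, rfl⟩ := Finset.mem_image.1 hv
      exact p.2
    have h1 : X.card ≤ ∑ v ∈ B, c v := by
      have : (X.map (Function.Embedding.subtype _)) ⊆
          B.sigma fun v => (Finset.univ : Finset (Fin (c v))) := by
        intro p hp
        obtain ⟨q, hq, rfl⟩ := Finset.mem_map.1 hp
        exact Finset.mem_sigma.2 ⟨Finset.mem_image_of_mem _ hq, Finset.mem_univ _⟩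
      have := Finset.card_le_card this
      rw [Finset.card_map, Finset.card_sigma] at this
      simpa using this
    have h2 : X.biUnion T = (Finset.univ.filter fun q : {q : Demand c // ¬ ev q.1} =>
        ∃ v ∈ B, adj v q.1.1).disjSum Finset.univ := by
      ext x
      rcases x with q | r
      · simp only [T, B, Finset.mem_biUnion, Finset.inl_mem_disjSum, Finset.mem_filter,
          Finset.mem_univ, true_and, Finset.mem_image, exists_exists_and_eq_and]
      · simp only [T, Finset.mem_biUnion, Finset.inr_mem_disjSum, Finset.mem_univ, and_true,
          iff_true]
        exact ⟨x₀, hx₀⟩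
    have h3 : (Finset.univ.filter fun q : {q : Demand c // ¬ ev q.1} => ∃ v ∈ B, adj v q.1.1).card =
        ∑ v ∈ N, c v := by
      rw [← Finset.card_map (Function.Embedding.subtype _)]
      have : ((Finset.univ.filter fun q : {q : Demand c // ¬ ev q.1} => ∃ v ∈ B, adj v q.1.1).map
          (Function.Embedding.subtype _)) =
          N.sigma fun v => (Finset.univ : Finset (Fin (c v))) := by
        ext q
        simp only [N, Finset.mem_map, Finset.mem_filter, Finset.mem_univ, true_and,
          Function.Embedding.subtype_apply, Finset.mem_sigma, and_true]
        constructor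
        · rintro ⟨q, h, rfl⟩; exact ⟨q.2, h⟩
        · rintro ⟨h, h'⟩; exact ⟨⟨q, h⟩, h', rfl⟩
      rw [this, Finset.card_sigma]; simp
    have h4 : ∑ v ∈ B, c v + ∑ v ∈ N', c v ≤ s := by
      rw [← Finset.sum_union]
      · refine hc _ fun v hv hv' => ?_
        rw [Finset.mem_union] at hv hv'
        simp only [N', Finset.mem_filter, Finset.mem_univ, true_and] at hv hv'
        rcases hv with hv | hv <;> rcases hv' with hv' | hv'
        · exact (hev v).1 (hB _ hv') (hB _ hv)
        · exact hv'.2 ⟨v, hv, Or.inl rfl⟩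
        · exact hv.2 ⟨_, hv', Or.inr rfl⟩
        · exact hv'.1 ((hev v).2 hv.1)
      · rw [Finset.disjoint_left]
        intro v hv hv'
        exact (Finset.mem_filter.1 hv').2.1 (hB v hv)
    have h5 : ∑ v with ¬ ev v, c v = ∑ v ∈ N, c v + ∑ v ∈ N', c v := by
      rw [← Finset.sum_filter_add_sum_filter_not _ (fun u => ∃ v ∈ B, adj v u),
        Finset.filter_filter, Finset.filter_filter]
    rw [h2, Finset.card_disjSum, h3, Finset.card_univ, Fintype.card_fin]
    simp only [d]
    omega
  obtain ⟨f, hf, hfT⟩ := (Finset.all_card_le_biUnion_card_iff_exists_injective T).1 hall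
  -- Each slot receives one edge covering all the units of demand assigned to it.
  have hE : ∀ x : Slot ev c d, ∃ i : Fin n, (∀ p, f p = x → p.1.1 = i ∨ p.1.1 = nx i) ∧
      ∀ q, x = Sum.inl q → q.1.1 = i ∨ q.1.1 = nx i := by
    intro x
    by_cases hx : ∃ p, f p = x
    · obtain ⟨p, rfl⟩ := hx
      have hp := hfT p
      rcases hfp : f p with q | r
      · rw [hfp] at hp
        have hadj : adj p.1.1 q.1.1 := by simpa [T] using hp
        have key : ∀ i : Fin n, (p.1.1 = i ∨ p.1.1 = nx i) → (q.1.1 = i ∨ q.1.1 = nx i) →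
            ∃ i : Fin n, (∀ p, f p = Sum.inl q → p.1.1 = i ∨ p.1.1 = nx i) ∧
              ∀ q', (Sum.inl q : Slot ev c d) = Sum.inl q' → q'.1.1 = i ∨ q'.1.1 = nx i := by
          intro i hi hi'
          refine ⟨i, fun p' hp' => ?_, fun q' hq' => ?_⟩
          · rw [hf (hp'.trans hfp.symm)]; exact hi
          · rw [← Sum.inl.inj hq']; exact hi'
        rcases hadj with h | h
        · exact key p.1.1 (Or.inl rfl) (Or.inr h)
        · exact key q.1.1 (Or.inr h) (Or.inl rfl)
      · refine ⟨p.1.1, fun p' hp' => ?_, fun q' hq' => by simp at hq'⟩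
        rw [hf (hp'.trans hfp.symm)]; exact Or.inl rfl
    · rcases x with q | r
      · refine ⟨q.1.1, fun p hp => absurd ⟨p, hp⟩ hx, fun q' hq' => ?_⟩
        rw [← Sum.inl.inj hq']; exact Or.inl rfl
      · exact ⟨0, fun p hp => absurd ⟨p, hp⟩ hx, fun q' hq' => by simp at hq'⟩
  choose E hE1 hE2 using hE
  let φ : Slot ev c d ≃ Fin s := Fintype.equivFinOfCardEq hcardσ
  refine ⟨fun t => E (φ.symm t), fun v => ?_⟩
  have main : ∀ g : Fin (c v) → Slot ev c d, Function.Injective g →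
      (∀ k, v = E (g k) ∨ v = nx (E (g k))) → c v ≤ cov (fun t => E (φ.symm t)) v := by
    intro g hg h
    rw [cov]
    conv_lhs => rw [← Fintype.card_fin (c v), ← Finset.card_univ]
    refine Finset.card_le_card_of_injOn (fun k => φ (g k)) (fun k _ => ?_)
      (fun k _ k' _ hk => hg (φ.injective hk))
    simpa using h k
  by_cases hv : ev v
  · refine main (fun k => f ⟨⟨v, k⟩, hv⟩) (fun k k' h => ?_)
      (fun k => hE1 _ ⟨⟨v, k⟩, hv⟩ rfl)
    simpa using hf h
  · refine main (fun k => Sum.inl ⟨⟨v, k⟩, hv⟩) (fun k k' h => ?_)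
      (fun k => hE2 _ ⟨⟨v, k⟩, hv⟩ rfl)
    simpa using h

end Duality

/-! ### Bounds on the homological degree -/

section Bounds

variable {K : Type} [Field K] {n : ℕ} [NeZero n]

/-- Counting degrees: if `a ≤ s` everywhere then faces have at most `2s` elements. -/
lemma card_face_le (G : SimpleGraph (Fin n))
    (hG : ∀ i j, G.Adj i j ↔ j = nx i ∨ i = nx j) (s : ℕ) (a : Fin n →₀ ℕ)
    (ha : ∀ v, a v ≤ s) (F : Finset (Fin n)) (hF : Face (compIdeal K n G ^ s) a F) :
    F.card ≤ 2 * s := by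
  obtain ⟨e, he⟩ := (face_iff G hG s a F).1 hF
  refine le_trans ?_ (sum_cov_le e)
  rw [← Finset.filter_univ_mem F, Finset.card_filter]
  refine Finset.sum_le_sum fun v _ => ?_
  have := he v
  have := ha v
  omega

lemma le_two_mul_of_nontrivial (G : SimpleGraph (Fin n))
    (hG : ∀ i j, G.Adj i j ↔ j = nx i ∨ i = nx j) (s i : ℕ) (a : Fin n →₀ ℕ)
    (h : Nontrivial (Hmod (compIdeal K n G ^ s) a i)) : i ≤ 2 * s := by
  by_cases ha : ∀ v, a v ≤ s
  · by_contra hi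
    obtain ⟨f, hf, hbd, hne⟩ := (nontrivial_hmod_iff _ a i).1 h
    refine hne 0 (fun F hF => absurd rfl hF) ?_
    rw [map_zero]
    ext F
    by_contra hF
    obtain ⟨h1, h2⟩ := hf F (Ne.symm hF)
    have := card_face_le G hG s a ha F h2
    omega
  · -- A vertex with `a v > s` is a cone point.
    push Not at ha
    obtain ⟨v, hv⟩ := ha
    refine absurd h (not_nontrivial_of_cone _ a i v fun F hF => ?_)
    rw [face_iff G hG] at hF ⊢
    obtain ⟨e, he⟩ := hF
    refine ⟨e, fun u => ?_⟩
    by_cases hu : u = v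
    · subst hu; simp; omega
    · simpa [hu] using he u

lemma le_sub_two_of_nontrivial (G : SimpleGraph (Fin n))
    (hG : ∀ i j, G.Adj i j ↔ j = nx i ∨ i = nx j)
    (ev : Fin n → Prop) (hev : ∀ v, ev (nx v) ↔ ¬ ev v) (hn : 2 ≤ n) (s i : ℕ) (a : Fin n →₀ ℕ)
    (h : Nontrivial (Hmod (compIdeal K n G ^ s) a i)) : i ≤ n - 2 := by
  refine card_le_of_nontrivial _ a i ?_ ?_ hn h
  · intro hall
    simp only [face_iff G hG] at hall ⊢
    obtain ⟨e, he⟩ := exists_cover ev hev (fun v => s + 1 - a v) s (by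
      intro A hA
      obtain ⟨w, hw⟩ : ∃ w, w ∉ A := by
        by_contra! h'; exact hA 0 (h' _) (h' _)
      obtain ⟨e, he⟩ := hall w
      refine le_trans (Finset.sum_le_sum fun v hv => ?_) (sum_cov_le_of_indep e A hA)
      have hvw : v ≠ w := fun h' => hw (h' ▸ hv)
      have := he v
      simp only [Finset.mem_erase, Finset.mem_univ, and_true, ne_eq, hvw, not_false_eq_true,
        if_true] at this
      omega)
    refine ⟨e, fun v => ?_⟩
    have := he v
    simp only [Finset.mem_univ, if_true]
    omega
  · intro hu F
    rw [face_iff G hG] at hu ⊢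
    obtain ⟨e, he⟩ := hu
    refine ⟨e, fun v => ?_⟩
    have := he v
    simp only [Finset.mem_univ, if_true] at this
    split_ifs <;> omega

/-- The multidegree carrying the extremal homology: `s` everywhere, lowered by `s - k` at the two
ends of the edge `{0, nx 0}`. -/
noncomputable def topDeg (n : ℕ) [NeZero n] (s k : ℕ) : Fin n →₀ ℕ :=
  Finsupp.equivFunOnFinite.symm fun v => if v = 0 ∨ v = nx 0 then k else s

lemma topDeg_apply (s k : ℕ) (v : Fin n) :
    topDeg n s k v = if v = 0 ∨ v = nx 0 then k else s := rfl

/-- If no face has `2k + 1` elements, the matching cycle gives homology in degree `2k`. -/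
lemma nontrivial_topDeg (G : SimpleGraph (Fin n))
    (hG : ∀ i j, G.Adj i j ↔ j = nx i ∨ i = nx j) (s k : ℕ) (hks : k ≤ s) (hkn : 2 * k < n)
    (hno : ∀ F : Finset (Fin n), F.card = 2 * k + 1 →
      ¬ Face (compIdeal K n G ^ s) (topDeg n s k) F) :
    Nontrivial (Hmod (compIdeal K n G ^ s) (topDeg n s k) (2 * k)) := by
  rw [nontrivial_hmod_iff]
  refine ⟨fun F => if F.card = 2 * k then mcyc K n n F else 0, ?_, ?_, ?_⟩
  · intro F hF
    have hcard : F.card = 2 * k := by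
      by_contra h'; simp [h'] at hF
    simp only [hcard, if_true] at hF
    refine ⟨hcard, (face_iff G hG _ _ _).2 ?_⟩
    obtain ⟨⟨l, hl, hcov⟩, -⟩ := mcyc_support n F hF
    obtain rfl : l.length = k := by omega
    obtain ⟨t, rfl⟩ := Nat.exists_eq_add_of_le hks
    -- The matching of `F`, together with `t = s - k` copies of the edge `{0, nx 0}`.
    refine ⟨Fin.append l.get fun _ => 0, fun v => ?_⟩
    rw [cov_eq_sum, Fin.sum_univ_add, topDeg_apply]
    simp only [Fin.append_left, Fin.append_right, Finset.sum_const, Finset.card_univ,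
      Fintype.card_fin, smul_eq_mul]
    have h1 : (if v ∈ F then 1 else 0) ≤
        ∑ i : Fin l.length, if v = l.get i ∨ v = nx (l.get i) then 1 else 0 := by
      split_ifs with hv
      · obtain ⟨e, he, hve⟩ := hcov v hv
        obtain ⟨i, rfl⟩ := List.get_of_mem he
        refine le_trans ?_ (Finset.single_le_sum (fun _ _ => Nat.zero_le _) (Finset.mem_univ i))
        rw [if_pos hve]
      · exact Nat.zero_le _
    split_ifs at h1 ⊢ <;> omega
  · ext R
    rw [bd_apply]
    by_cases hR : R.card + 1 = 2 * k
    · rw [← congrFun (bd_mcyc_self (K := K) (n := n)) R, bd_apply]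
      refine Finset.sum_congr rfl fun j _ => ?_
      split_ifs with h1 h2
      · rfl
      · rfl
      · exact absurd (by rw [Finset.card_insert_of_notMem h1, hR]) h2
    · refine Finset.sum_eq_zero fun j _ => ?_
      split_ifs with h1 h2
      · rfl
      · rw [Finset.card_insert_of_notMem h1] at h2; exact absurd h2 hR
      · simp
  · intro g hg hbd
    have hg0 : g = 0 := by
      ext F
      by_contra h'
      exact hno F (hg F h').1 (hg F h').2
    subst hg0
    have h1 := congrFun hbd (Finset.univ.filter fun v : Fin n => (v : ℕ) < 2 * k)
    have hcard : (Finset.univ.filter fun v : Fin n => (v : ℕ) < 2 * k).card = 2 * k := by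
      rw [Fin.card_filter_val_lt]; omega
    rw [map_zero, hcard, if_pos rfl] at h1
    exact mcyc_ne_zero n le_rfl k (by omega) hkn h1.symm

end Bounds

/-- For `s ≥ m - 1`, a face of cardinality `2m - 1` in multidegree `topDeg`
would contain a whole colour class, whose demand exceeds `s`. -/
lemma not_face_of_card {K : Type} [Field K] {m : ℕ} [NeZero (2 * m)]
    (G : SimpleGraph (Fin (2 * m)))
    (hG : ∀ i j, G.Adj i j ↔ j = nx i ∨ i = nx j)
    (hev : ∀ v : Fin (2 * m), (nx v : ℕ) % 2 = 0 ↔ ¬ (v : ℕ) % 2 = 0)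
    (s : ℕ) (hm : 2 ≤ m) (hs : m - 1 ≤ s) (F : Finset (Fin (2 * m)))
    (hF : F.card = 2 * (m - 1) + 1) :
    ¬ Face (compIdeal K (2 * m) G ^ s) (topDeg (2 * m) s (m - 1)) F := by
  rw [face_iff G hG]
  rintro ⟨e, he⟩
  have hc : Fᶜ.card = 1 := by rw [Finset.card_compl, Fintype.card_fin]; omega
  obtain ⟨w, hw⟩ := Finset.card_eq_one.1 hc
  have hFw : ∀ v, v ≠ w → v ∈ F := by
    intro v hv
    by_contra hvF
    exact hv (by simpa [hw] using Finset.mem_compl.2 hvF)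
  -- `r` is the parity different from that of `w`
  obtain ⟨r, hr2, hrw⟩ : ∃ r, r < 2 ∧ (w : ℕ) % 2 ≠ r :=
    ⟨1 - (w : ℕ) % 2, by omega, by omega⟩
  let A : Finset (Fin (2 * m)) := Finset.univ.filter fun v => (v : ℕ) % 2 = r
  have hAmem : ∀ v, v ∈ A ↔ (v : ℕ) % 2 = r := fun v => by simp [A]
  have hA : ∀ v ∈ A, nx v ∉ A := by
    intro v hv hv'
    rw [hAmem] at hv hv'
    have := hev v
    omega
  have hcardA : m ≤ A.card := by
    have := Finset.card_le_card_of_injOn (s := (Finset.univ : Finset (Fin m))) (t := A)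
      (fun k => (⟨2 * k + r, by have := k.2; omega⟩ : Fin (2 * m)))
      (fun k _ => by
        simp only [Finset.mem_coe]
        rw [hAmem]; simp only; omega)
      (fun k _ k' _ h => by
        simp only [Fin.mk.injEq] at h
        ext; omega)
    simpa using this
  obtain ⟨z, hzA, hz⟩ : ∃ z ∈ A, z = 0 ∨ z = nx 0 := by
    by_cases hr : r = 0
    · exact ⟨0, by rw [hAmem, hr]; simp, Or.inl rfl⟩
    · refine ⟨nx 0, ?_, Or.inr rfl⟩
      rw [hAmem]
      have := hev 0
      simp only [Fin.val_zero, Nat.zero_mod, not_true, iff_false] at this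
      omega
  have hcov := sum_cov_le_of_indep e A hA
  have hge : ∀ v ∈ A, s + 1 ≤ topDeg (2 * m) s (m - 1) v + cov e v := by
    intro v hv
    have hvF : v ∈ F := hFw v (by rintro rfl; exact hrw ((hAmem v).1 hv))
    simpa [hvF] using he v
  have h1 : ∀ v ∈ A.erase z, 1 ≤ cov e v := by
    intro v hv
    have := hge v (Finset.mem_of_mem_erase hv)
    rw [topDeg_apply] at this
    split_ifs at this <;> omega
  have h2 := hge z hzA
  rw [topDeg_apply, if_pos hz] at h2
  have h3 := Finset.card_nsmul_le_sum _ (fun v => cov e v) 1 h1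
  rw [smul_eq_mul, mul_one, Finset.card_erase_of_mem hzA] at h3
  rw [← Finset.add_sum_erase _ _ hzA] at hcov
  omega

lemma pdim_eq {K : Type} [Field K] {m : ℕ} (hm : 2 ≤ m) (G : SimpleGraph (Fin (2 * m)))
    (hadj : ∀ i j : Fin (2 * m), G.Adj i j ↔
      ((j : ℕ) = ((i : ℕ) + 1) % (2 * m) ∨ (i : ℕ) = ((j : ℕ) + 1) % (2 * m))) (s : ℕ) :
    pdim (compIdeal K (2 * m) G ^ s) = 2 * min s (m - 1) := by
  have : NeZero (2 * m) := ⟨by omega⟩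
  have hG : ∀ i j, G.Adj i j ↔ j = nx i ∨ i = nx j := by
    intro i j
    rw [hadj, Fin.ext_iff, Fin.ext_iff, nx_val, nx_val]
  have hev : ∀ v : Fin (2 * m), (nx v : ℕ) % 2 = 0 ↔ ¬ (v : ℕ) % 2 = 0 := by
    intro v
    rw [nx_val, Nat.mod_mod_of_dvd _ (dvd_mul_right 2 m)]
    omega
  refine IsGreatest.csSup_eq ⟨⟨topDeg (2 * m) s (min s (m - 1)), ?_⟩, ?_⟩
  · refine nontrivial_topDeg G hG s _ (min_le_left _ _) (by omega) fun F hF hface => ?_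
    rcases le_total s (m - 1) with h | h
    · rw [min_eq_left h] at hF hface
      have := card_face_le G hG s _ (fun v => by rw [topDeg_apply]; split_ifs <;> exact le_rfl)
        F hface
      omega
    · rw [min_eq_right h] at hF hface
      exact not_face_of_card G hG hev s hm h F hF hface
  · rintro i ⟨a, ha⟩
    have h1 := le_two_mul_of_nontrivial G hG s i a ha
    have h2 := le_sub_two_of_nontrivial G hG (fun v => (v : ℕ) % 2 = 0) hev (by omega) s i a ha
    omega

/-- For the even cycle `G` with `2m` vertices (`m ≥ 2`),
`pd(I_c(G)^s) = 2s` for `s ∈ [m-1]` and `pd(I_c(G)^s) = 2m - 2` for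
`s ≥ m - 1`. -/
theorem pdim_compIdeal_pow_even_cycle
    (K : Type) [Field K] (m : ℕ) (hm : 2 ≤ m) (G : SimpleGraph (Fin (2 * m)))
    (hadj : ∀ i j : Fin (2 * m), G.Adj i j ↔
      ((j : ℕ) = ((i : ℕ) + 1) % (2 * m) ∨ (i : ℕ) = ((j : ℕ) + 1) % (2 * m))) :
    (∀ s : ℕ, 1 ≤ s → s ≤ m - 1 → pdim (compIdeal K (2 * m) G ^ s) = 2 * s) ∧
    (∀ s : ℕ, m - 1 ≤ s → pdim (compIdeal K (2 * m) G ^ s) = 2 * m - 2) := by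
  refine ⟨fun s _ hs => ?_, fun s hs => ?_⟩
  · rw [pdim_eq hm G hadj, min_eq_left hs]
  · rw [pdim_eq hm G hadj, min_eq_right hs]; omega

end Paper
end

section
/- Let G be a tree on vertex set [n], labeled so that vertex n is a leaf and dist(i,n) ≥ dist(j,n) whenever 1 ≤ i < j ≤ n−1 (so that every j ∈ [n−1] has a unique neighbor larger than j). If i − y_1 − y_2 − ⋯ − y_p − k is a walk in G with i < k and y_1 < i, then there exists an index q with 2 ≤ q ≤ p such that y_q = i. -/
/-!
Let `r` be the last vertex. Larger labels are weakly closer to `r`. Since `y 1 < i`, a shortest path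
from `i` to `r` avoids `y 1`, so prepending `y 1` gives a path from `y 1` to `r` through `i`; in a
tree this is the only one, hence every walk from `y 1` to `r` meets `i`. Since `i < k`, a shortest
path from `k` to `r` avoids `i`. If no `y q` with `2 ≤ q ≤ p` were equal to `i`, then following the
given walk from `y 1` to `k` and continuing along this shortest path would reach `r` without
meeting `i`, a contradiction.
-/

namespace Paper

/-- Along a shortest walk to `r`, every vertex other than the start is strictly closer to `r`. -/
lemma dist_lt_of_mem_support {V : Type*} {G : SimpleGraph V} {k r x : V} (Q : G.Walk k r)
    (hQ : Q.length = G.dist k r) (hx : x ∈ Q.support) (hxk : x ≠ k) :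
    G.dist x r < G.dist k r := by
  classical
  have hlen := congrArg SimpleGraph.Walk.length (Q.take_spec hx)
  rw [SimpleGraph.Walk.length_append] at hlen
  have hdrop := SimpleGraph.dist_le (Q.dropUntil x hx)
  have htake : (Q.takeUntil x hx).length ≠ 0 := fun h0 =>
    hxk (SimpleGraph.Walk.eq_of_length_eq_zero h0).symm
  omega

/-- In a tree, if a neighbour `a` of `i` is at least as far from `r` as `i`, then every
walk from `a` to `r` meets `i`. -/
lemma mem_support_of_dist_le {V : Type*} {G : SimpleGraph V} (hG : G.IsTree) {a i r : V}
    (hadj : G.Adj a i) (hd : G.dist i r ≤ G.dist a r) (W : G.Walk a r) : i ∈ W.support := by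
  classical
  obtain ⟨Q, hQ, hQl⟩ := hG.connected.exists_path_of_dist i r
  have ha : a ∉ Q.support := fun h =>
    (dist_lt_of_mem_support Q hQl h hadj.ne).not_ge hd
  have hpath : (SimpleGraph.Walk.cons hadj Q).IsPath := hQ.cons ha
  have heq : SimpleGraph.Walk.cons hadj Q = W.bypass := congrArg Subtype.val
    ((hG.isAcyclic.subsingleton_path a r).elim ⟨_, hpath⟩ ⟨W.bypass, W.bypass_isPath⟩)
  have hi : i ∈ (SimpleGraph.Walk.cons hadj Q).support := by simp
  rw [heq] at hi
  exact W.support_bypass_subset_support hi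

/-- In a tree labelled so that `n` is a leaf and
`dist(i,n) ≥ dist(j,n)` for `i < j`, every walk `i - y_1 - ⋯ - y_p - k` with
`i < k` and `y_1 < i` passes through `i` again: `y_q = i` for some
`2 ≤ q ≤ p`. -/
theorem tree_walk_revisits
    (n : ℕ) (hn : 0 < n) (G : SimpleGraph (Fin n)) (htree : G.IsTree)
    (hleaf : ∃! m : Fin n, G.Adj ⟨n - 1, by omega⟩ m)
    (hdist : ∀ i j : Fin n, i < j → j ≠ ⟨n - 1, by omega⟩ →
      G.dist j ⟨n - 1, by omega⟩ ≤ G.dist i ⟨n - 1, by omega⟩)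
    (p : ℕ) (hp : 1 ≤ p) (y : ℕ → Fin n) (i k : Fin n)
    (hadj0 : G.Adj i (y 1))
    (hadjc : ∀ t, 1 ≤ t → t < p → G.Adj (y t) (y (t + 1)))
    (hadjl : G.Adj (y p) k)
    (hik : i < k) (hy1 : y 1 < i) :
    ∃ q : ℕ, 2 ≤ q ∧ q ≤ p ∧ y q = i := by
  by_contra! hno
  -- The monotonicity of the distance extends to the last vertex, whose distance is zero.
  have hmono : ∀ a b : Fin n, a < b →
      G.dist b ⟨n - 1, by omega⟩ ≤ G.dist a ⟨n - 1, by omega⟩ := by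
    intro a b hab
    by_cases hb : b = ⟨n - 1, by omega⟩
    · simp [hb]
    · exact hdist a b hab hb
  generalize (⟨n - 1, by omega⟩ : Fin n) = r at hmono
  have hwalk : ∀ t, 1 ≤ t → t ≤ p → ∃ W : G.Walk (y 1) (y t), i ∉ W.support := by
    intro t ht
    induction t, ht using Nat.le_induction with
    | base => exact fun _ => ⟨.nil, by simpa using hadj0.ne⟩
    | succ t ht ih =>
      intro htp
      obtain ⟨W, hW⟩ := ih (by omega)
      refine ⟨W.concat (hadjc t ht (by omega)), ?_⟩
      have := hno (t + 1) (by omega) htp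
      simp [SimpleGraph.Walk.support_concat, hW, this.symm]
  obtain ⟨W, hW⟩ := hwalk p hp le_rfl
  obtain ⟨Q, hQ, hQl⟩ := htree.connected.exists_path_of_dist k r
  have hiQ : i ∉ Q.support := fun h =>
    (dist_lt_of_mem_support Q hQl h hik.ne).not_ge (hmono i k hik)
  have hmem := mem_support_of_dist_le htree hadj0.symm (hmono _ _ hy1)
    (W.append (.cons hadjl Q))
  rw [SimpleGraph.Walk.mem_support_append_iff, SimpleGraph.Walk.support_cons,
    List.mem_cons] at hmem
  rcases hmem with h | h | h
  · exact hW h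
  · exact hW (h ▸ W.end_mem_support)
  · exact hiQ h

end Paper
end
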